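/- Let λ ∈ [0,1), σ := √(1−λ) ∈ (0,1], and z := 2σ − 1. Then |79/691 − (737/2580)·(z/2) + (147/412)·(z/2)² − (49/165)·(z/2)³ + (103/556)·(z/2)⁴ − (131/1419)·(z/2)⁵ + (13/340)·(z/2)⁶ − (6/445)·(z/2)⁷ − w₂⁺(5/2)| < 3·10⁻⁵, and |−52/509 + (26/185)·(z/2) − (10/313)·(z/2)² − (80/857)·(z/2)³ + (41/307)·(z/2)⁴ − (41/392)·(z/2)⁵ + (66/1109)·(z/2)⁶ − (13/480)·(z/2)⁷ − (w₂⁺)'(5/2)| < 6·10⁻⁵, where (w₂⁺)' denotes the derivative in r. -/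

import Mathlib

/-!
Write `E = expInt`, `h(s) = (1 + s) e^{5(1+s)} E(5(1+s))` (`scaledE`) and `v = σ - 1/2 = z/2`, so
that `|v| ≤ 1/2`. At `r = 5/2` everything is expressed through `h`, `e^{-5}` and `e^{-5σ/2}`:

* `f₁ = -e^{-5} (h(σ) - h(0)) / σ` (`f1_eq`) and `∂ᵣ f₁ = e^{-5} (2/5 - 2 h(σ))`;
* `w = 2/5 e^{-5σ/2} (1 + a₀ f₁)` and `w' = -(σ + 2/5) w + 2/5 a₀ e^{-5σ/2} ∂ᵣ f₁`
  (`w2p_hasDerivAt`).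

The functions `h` and `e^{-5s/2}` solve the linear equations `h' = (6 + 5s)/(1 + s) h - 1` and
`y' = -5/2 y`. The explicit polynomials `scaledPoly` and `expPoly` in `v` (rounded Taylor
polynomials at `v = 0`) satisfy these equations up to a tiny residual, so multiplying the error by
an integrating factor, with a slack of the size of the tolerance, gives a monotone function. The
error on all of `[0, 1]` is therefore controlled by its value at one end point, `s = 0` for the
exponential and `s = 1` for `h` (`exp_sub_expPoly`, `scaledE_sub_scaledPoly`). The value
`h(1) = 2 e^{10} E(10)` comes from two convergents of the continued fraction of `e^x E(x)`, which
bound it from both sides because `E - e^{-x} R` is monotone and tends to `0` at infinity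
(`expInt_lower`, `expInt_upper`).

The difference quotient of `h` has no singularity at `σ = 0`: the same equation bounds the
derivative of `h - scaledPoly`, and the mean value inequality then bounds the quotient uniformly in
`σ` (`scaledE_quotient`). Substituting the polynomials yields `wPoly` and `wPoly'`. The stated
polynomials agree with these nearly coefficient by coefficient, so estimating each monomial by
`|v^k| ≤ 2^{-k}` is enough (`wPoly_approx`, `wPoly'_approx`).
-/

open Real Set Filter MeasureTheory

/-- `E x = ∫_x^∞ e^{-t}/t dt`, so that `Ei(-x) = -E x` for `x > 0`. -/
noncomputable def expInt (x : ℝ) : ℝ := ∫ t in Set.Ioi x, Real.exp (-t) / t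

/-- `f₁(r) = σ⁻¹ (E(2r) - (1+σ) e^{2σr} E(2(1+σ)r))`. -/
noncomputable def f1 (σ r : ℝ) : ℝ :=
  σ⁻¹ * (expInt (2 * r) - (1 + σ) * Real.exp (2 * σ * r) * expInt (2 * (1 + σ) * r))

/-- The quasi-solution `w₂⁺(r) = (e^{-σr}/r)(1 + a₀ f₁(r))` with `a₀ = 1413/64`. -/
noncomputable def w2p (σ r : ℝ) : ℝ :=
  (Real.exp (-σ * r) / r) * (1 + (1413 / 64) * f1 σ r)

/-! ### The exponential integral -/

lemma expInt_integrableOn {x : ℝ} (hx : 0 < x) :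
    IntegrableOn (fun t : ℝ => Real.exp (-t) / t) (Ioi x) := by
  have h := (integrableOn_exp_neg_Ioi x).const_mul x⁻¹
  refine Integrable.mono' h (Measurable.aestronglyMeasurable (by fun_prop)) ?_
  filter_upwards [ae_restrict_mem measurableSet_Ioi] with t ht
  have ht' : x < t := ht
  have h0 : 0 < t := hx.trans ht'
  rw [Real.norm_of_nonneg (by positivity), div_eq_inv_mul]
  gcongr

lemma expInt_hasDerivAt {x : ℝ} (hx : 0 < x) :
    HasDerivAt expInt (-(Real.exp (-x) / x)) x := by
  have hc : ContinuousOn (fun t : ℝ => Real.exp (-t) / t) (Ioi 0) :=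
    ContinuousOn.div (by fun_prop) continuousOn_id (fun t ht => ne_of_gt ht)
  have key : HasDerivAt (fun u => ∫ t in (x / 2)..u, Real.exp (-t) / t)
      (Real.exp (-x) / x) x := by
    refine intervalIntegral.integral_hasDerivAt_right ?_ ?_ ?_
    · refine ContinuousOn.intervalIntegrable (hc.mono ?_)
      intro t ht
      rw [uIcc_of_le (by linarith)] at ht
      exact lt_of_lt_of_le (by linarith) ht.1
    · exact hc.stronglyMeasurableAtFilter isOpen_Ioi x hx
    · exact hc.continuousAt (Ioi_mem_nhds hx)
  have h2 := key.const_sub (expInt (x / 2))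
  refine h2.congr_of_eventuallyEq ?_
  filter_upwards [Ioi_mem_nhds (show x / 2 < x by linarith)] with u hu
  have := intervalIntegral.integral_Ioi_sub_Ioi
    (expInt_integrableOn (show 0 < x / 2 by linarith)) (le_of_lt hu)
  unfold expInt
  linarith

lemma expInt_tendsto : Tendsto expInt atTop (nhds 0) := by
  have h1 : Tendsto (fun x : ℝ => Real.exp (-x)) atTop (nhds 0) :=
    Real.tendsto_exp_neg_atTop_nhds_zero
  refine squeeze_zero' ?_ ?_ h1
  · filter_upwards [eventually_ge_atTop 1] with x hx
    refine setIntegral_nonneg measurableSet_Ioi (fun t ht => ?_)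
    have : 0 < t := lt_trans (by linarith) (show x < t from ht)
    positivity
  · filter_upwards [eventually_ge_atTop 1] with x hx
    rw [← integral_exp_neg_Ioi x]
    refine setIntegral_mono_on (expInt_integrableOn (by linarith)) (integrableOn_exp_neg_Ioi x)
      measurableSet_Ioi (fun t ht => ?_)
    have : 1 ≤ t := hx.trans (le_of_lt ht)
    exact div_le_self (Real.exp_pos _).le this

/-- A function that decreases to `0` at infinity is nonnegative. -/
lemma nonneg_of_deriv_nonpos {D D' : ℝ → ℝ} {a : ℝ} (hD : ∀ x, a ≤ x → HasDerivAt D (D' x) x)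
    (hD' : ∀ x, a ≤ x → D' x ≤ 0) (hlim : Tendsto D atTop (nhds 0)) : 0 ≤ D a := by
  have hanti : AntitoneOn D (Ici a) := by
    refine antitoneOn_of_deriv_nonpos (convex_Ici a)
      (fun x hx => (hD x hx).continuousAt.continuousWithinAt)
      (fun x hx => ?_) (fun x hx => ?_)
    · rw [interior_Ici] at hx
      exact (hD x (le_of_lt hx)).differentiableAt.differentiableWithinAt
    · rw [interior_Ici] at hx
      rw [(hD x (le_of_lt hx)).deriv]
      exact hD' x (le_of_lt hx)
  refine le_of_tendsto hlim ?_
  filter_upwards [eventually_ge_atTop a] with x hx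
  exact hanti self_mem_Ici hx hx

lemma tendsto_exp_neg_mul {R : ℝ → ℝ} (hR : ∀ x, 1 ≤ x → 0 ≤ R x ∧ R x ≤ 1) :
    Tendsto (fun x => Real.exp (-x) * R x) atTop (nhds 0) := by
  refine squeeze_zero' ?_ ?_ Real.tendsto_exp_neg_atTop_nhds_zero
  · filter_upwards [eventually_ge_atTop 1] with x hx
    exact mul_nonneg (Real.exp_pos _).le (hR x hx).1
  · filter_upwards [eventually_ge_atTop 1] with x hx
    exact mul_le_of_le_one_right (Real.exp_pos _).le (hR x hx).2

/-- With `R` the rational factor, `R - R' - 1/x = -576 / (x q²)` for the denominator `q` of `R`, so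
`E - e^{-x} R` decreases to `0`. -/
lemma expInt_lower {x : ℝ} (hx : 1 ≤ x) :
    Real.exp (-x) * ((x^3 + 15*x^2 + 58*x + 50) / (x^4 + 16*x^3 + 72*x^2 + 96*x + 24))
      ≤ expInt x := by
  rw [← sub_nonneg]
  refine nonneg_of_deriv_nonpos (D := fun x => expInt x - Real.exp (-x) *
      ((x^3 + 15*x^2 + 58*x + 50) / (x^4 + 16*x^3 + 72*x^2 + 96*x + 24)))
    (D' := fun x => -(576 * Real.exp (-x) / (x * (x^4 + 16*x^3 + 72*x^2 + 96*x + 24)^2)))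
    (fun y hy => ?_) (fun y hy => ?_) ?_
  · have hy0 : 0 < y := by linarith
    have hq : y^4 + 16*y^3 + 72*y^2 + 96*y + 24 ≠ 0 := by positivity
    have hp : HasDerivAt (fun x : ℝ => x^3 + 15*x^2 + 58*x + 50) (3*y^2 + 30*y + 58) y := by
      refine ((((hasDerivAt_pow 3 y).add ((hasDerivAt_pow 2 y).const_mul 15)).add
        ((hasDerivAt_id y).const_mul 58)).add_const 50).congr_deriv ?_
      norm_num; ring
    have hd : HasDerivAt (fun x : ℝ => x^4 + 16*x^3 + 72*x^2 + 96*x + 24)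
        (4*y^3 + 48*y^2 + 144*y + 96) y := by
      refine (((((hasDerivAt_pow 4 y).add ((hasDerivAt_pow 3 y).const_mul 16)).add
        ((hasDerivAt_pow 2 y).const_mul 72)).add
        ((hasDerivAt_id y).const_mul 96)).add_const 24).congr_deriv ?_
      norm_num; ring
    refine ((expInt_hasDerivAt hy0).sub ((hasDerivAt_neg y).exp.mul (hp.div hd hq))).congr_deriv ?_
    simp only [Pi.div_apply]
    field_simp
    ring
  · have hy0 : 0 < y := by linarith
    rw [neg_nonpos]; positivity
  · have := expInt_tendsto.sub (tendsto_exp_neg_mul (R := fun x =>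
      (x^3 + 15*x^2 + 58*x + 50) / (x^4 + 16*x^3 + 72*x^2 + 96*x + 24)) ?_)
    · simpa using this
    · intro y hy
      have hy0 : 0 < y := by linarith
      refine ⟨by positivity, ?_⟩
      rw [div_le_one (by positivity)]
      have : 1 ≤ y^2 := one_le_pow₀ hy
      have : 1 ≤ y^3 := one_le_pow₀ hy
      have : 1 ≤ y^4 := one_le_pow₀ hy
      linarith

/-- With `R` the rational factor, `R - R' - 1/x = 144 / q²` for the denominator `q` of `R`, so
`e^{-x} R - E` decreases to `0`. -/
lemma expInt_upper {x : ℝ} (hx : 1 ≤ x) :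
    expInt x ≤ Real.exp (-x) *
      ((x^3 + 11*x^2 + 26*x + 6) / (x^4 + 12*x^3 + 36*x^2 + 24*x)) := by
  rw [← sub_nonneg]
  refine nonneg_of_deriv_nonpos (D := fun x => Real.exp (-x) *
      ((x^3 + 11*x^2 + 26*x + 6) / (x^4 + 12*x^3 + 36*x^2 + 24*x)) - expInt x)
    (D' := fun x => -(144 * Real.exp (-x) / (x^4 + 12*x^3 + 36*x^2 + 24*x)^2))
    (fun y hy => ?_) (fun y hy => ?_) ?_
  · have hy0 : 0 < y := by linarith
    have hq : y^4 + 12*y^3 + 36*y^2 + 24*y ≠ 0 := by positivity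
    have hp : HasDerivAt (fun x : ℝ => x^3 + 11*x^2 + 26*x + 6) (3*y^2 + 22*y + 26) y := by
      refine ((((hasDerivAt_pow 3 y).add ((hasDerivAt_pow 2 y).const_mul 11)).add
        ((hasDerivAt_id y).const_mul 26)).add_const 6).congr_deriv ?_
      norm_num; ring
    have hd : HasDerivAt (fun x : ℝ => x^4 + 12*x^3 + 36*x^2 + 24*x)
        (4*y^3 + 36*y^2 + 72*y + 24) y := by
      refine ((((hasDerivAt_pow 4 y).add ((hasDerivAt_pow 3 y).const_mul 12)).add
        ((hasDerivAt_pow 2 y).const_mul 36)).add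
        ((hasDerivAt_id y).const_mul 24)).congr_deriv ?_
      norm_num; ring
    refine (((hasDerivAt_neg y).exp.mul (hp.div hd hq)).sub (expInt_hasDerivAt hy0)).congr_deriv ?_
    simp only [Pi.div_apply]
    field_simp
    ring
  · have hy0 : 0 < y := by linarith
    rw [neg_nonpos]; positivity
  · have := (tendsto_exp_neg_mul (R := fun x =>
      (x^3 + 11*x^2 + 26*x + 6) / (x^4 + 12*x^3 + 36*x^2 + 24*x)) ?_).sub expInt_tendsto
    · simpa using this
    · intro y hy
      have hy0 : 0 < y := by linarith
      refine ⟨by positivity, ?_⟩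
      rw [div_le_one (by positivity)]
      have : y ≤ y^2 := by nlinarith
      have : 1 ≤ y^3 := one_le_pow₀ hy
      have : 0 ≤ y^4 := by positivity
      linarith

/-! ### The scaled exponential integral -/

/-- The function `h(s) = (1 + s) e^{5(1+s)} E(5(1+s))`, which is `(1/5) x e^x E(x)` at
`x = 5(1+s)`. -/
noncomputable def scaledE (s : ℝ) : ℝ :=
  (1 + s) * Real.exp (5 * (1 + s)) * expInt (5 * (1 + s))

lemma scaledE_one : |scaledE 1 - 2 * 0.0915634| ≤ 4e-7 := by
  have h1 := expInt_lower (x := 10) (by norm_num)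
  have h2 := expInt_upper (x := 10) (by norm_num)
  have he : scaledE 1 = 2 * (Real.exp 10 * expInt 10) := by unfold scaledE; norm_num; ring
  have h3 := mul_le_mul_of_nonneg_left h1 (Real.exp_pos 10).le
  have h4 := mul_le_mul_of_nonneg_left h2 (Real.exp_pos 10).le
  rw [← mul_assoc, ← Real.exp_add] at h3 h4
  norm_num at h3 h4
  rw [he, abs_le]
  constructor <;> norm_num <;> linarith

lemma scaledE_hasDerivAt {s : ℝ} (hs : 0 ≤ s) :
    HasDerivAt scaledE ((6 + 5 * s) / (1 + s) * scaledE s - 1) s := by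
  have hs1 : 0 < 1 + s := by linarith
  have hlin : HasDerivAt (fun s : ℝ => 5 * (1 + s)) 5 s := by
    simpa using ((hasDerivAt_id s).const_add 1).const_mul 5
  have hE := (expInt_hasDerivAt (x := 5 * (1 + s)) (by positivity)).comp s hlin
  have h1 : HasDerivAt (fun s : ℝ => 1 + s) 1 s := (hasDerivAt_id s).const_add 1
  refine ((h1.mul hlin.exp).mul hE).congr_deriv ?_
  simp only [Function.comp, scaledE, Real.exp_neg, Pi.mul_apply]
  have := Real.exp_pos (5 * (1 + s))
  field_simp
  ring

/-! ### The approximating polynomials -/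

/-- Approximation of `(h(s) - h(0)) / s` in the variable `v = s - 1/2`. -/
noncomputable def quotPoly (v : ℝ) : ℝ :=
  (16230556 - 9035310 * v + 5093695 * v^2 - 2903167 * v^3 + 1669436 * v^4 - 964863 * v^5
    + 554674 * v^6 - 306261 * v^7 + 139969 * v^8) / 10^9

/-- Approximation of `h(s)` in the variable `v = s - 1/2`. It is built from `quotPoly` so that
`(scaledPoly v - scaledPoly (-1/2)) / (v + 1/2)` is exactly `quotPoly v`; the constant is a rounded
value of `h(0)`. -/
noncomputable def scaledPoly (v : ℝ) : ℝ := 170422293 / 10^9 + (v + 1/2) * quotPoly v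

/-- Rounded Taylor polynomial at `v = 0` of `e^{-5s/2} = e^{-5/4} e^{-5v/2}`, where
`v = s - 1/2`. -/
noncomputable def expPoly (v : ℝ) : ℝ :=
  (286504797 - 716261992 * v + 895327490 * v^2 - 746106242 * v^3 + 466316401 * v^4
    - 233158201 * v^5 + 97149250 * v^6 - 34696161 * v^7 + 10842550 * v^8 - 3011820 * v^9
    + 752955 * v^10) / 10^9

/-- The derivative of `scaledPoly`. -/
noncomputable def scaledPoly' (v : ℝ) : ℝ := quotPoly v + (v + 1/2) *
  ((-9035310 + 2 * 5093695 * v - 3 * 2903167 * v^2 + 4 * 1669436 * v^3 - 5 * 964863 * v^4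
    + 6 * 554674 * v^5 - 7 * 306261 * v^6 + 8 * 139969 * v^7) / 10^9)

/-- The derivative of `expPoly`. -/
noncomputable def expPoly' (v : ℝ) : ℝ :=
  (-716261992 + 2 * 895327490 * v - 3 * 746106242 * v^2 + 4 * 466316401 * v^3
    - 5 * 233158201 * v^4 + 6 * 97149250 * v^5 - 7 * 34696161 * v^6 + 8 * 10842550 * v^7
    - 9 * 3011820 * v^8 + 10 * 752955 * v^9) / 10^9

lemma scaledPoly_hasDerivAt (v : ℝ) : HasDerivAt scaledPoly (scaledPoly' v) v := by
  have h : HasDerivAt quotPoly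
      ((-9035310 + 2 * 5093695 * v - 3 * 2903167 * v^2 + 4 * 1669436 * v^3 - 5 * 964863 * v^4
        + 6 * 554674 * v^5 - 7 * 306261 * v^6 + 8 * 139969 * v^7) / 10^9) v := by
    refine (((((((((((hasDerivAt_id v).const_mul 9035310).const_sub 16230556).add
      ((hasDerivAt_pow 2 v).const_mul 5093695)).sub
      ((hasDerivAt_pow 3 v).const_mul 2903167)).add
      ((hasDerivAt_pow 4 v).const_mul 1669436)).sub
      ((hasDerivAt_pow 5 v).const_mul 964863)).add
      ((hasDerivAt_pow 6 v).const_mul 554674)).sub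
      ((hasDerivAt_pow 7 v).const_mul 306261)).add
      ((hasDerivAt_pow 8 v).const_mul 139969)).div_const (10^9)).congr_deriv ?_
    norm_num; ring
  refine ((((hasDerivAt_id v).add_const (1/2)).mul h).const_add (170422293 / 10^9)).congr_deriv ?_
  simp only [id, scaledPoly']; ring

lemma expPoly_hasDerivAt (v : ℝ) : HasDerivAt expPoly (expPoly' v) v := by
  refine (((((((((((((hasDerivAt_id v).const_mul 716261992).const_sub 286504797).add
    ((hasDerivAt_pow 2 v).const_mul 895327490)).sub
    ((hasDerivAt_pow 3 v).const_mul 746106242)).add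
    ((hasDerivAt_pow 4 v).const_mul 466316401)).sub
    ((hasDerivAt_pow 5 v).const_mul 233158201)).add
    ((hasDerivAt_pow 6 v).const_mul 97149250)).sub
    ((hasDerivAt_pow 7 v).const_mul 34696161)).add
    ((hasDerivAt_pow 8 v).const_mul 10842550)).sub
    ((hasDerivAt_pow 9 v).const_mul 3011820)).add
    ((hasDerivAt_pow 10 v).const_mul 752955)).div_const (10^9)).congr_deriv ?_
  simp only [expPoly']
  norm_num; ring

lemma pow_bounds {v : ℝ} (hv : |v| ≤ 1/2) (k : ℕ) : -(1/2)^k ≤ v^k ∧ v^k ≤ (1/2)^k := by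
  rw [← abs_le, abs_pow]
  exact pow_le_pow_left₀ (abs_nonneg v) hv k

/-- `scaledPoly` nearly solves `(1 + s) h' = (6 + 5s) h - (1 + s)`, written with
`s = v + 1/2`. -/
lemma scaledPoly_residual {v : ℝ} (hv : |v| ≤ 1/2) :
    |(3/2 + v) * scaledPoly' v - (17/2 + 5 * v) * scaledPoly v + (3/2 + v)| ≤ 6e-6 := by
  unfold scaledPoly scaledPoly' quotPoly
  have h := pow_bounds hv
  rw [abs_le]
  constructor <;>
    linarith [h 1, h 2, h 3, h 4, h 5, h 6, h 7, h 8, h 9, h 10]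

lemma expPoly_residual {v : ℝ} (hv : |v| ≤ 1/2) :
    |expPoly' v + 5/2 * expPoly v| ≤ 2.5e-6 := by
  unfold expPoly expPoly'
  have h := pow_bounds hv
  rw [abs_le]
  constructor <;>
    linarith [h 1, h 2, h 3, h 4, h 5, h 6, h 7, h 8, h 9, h 10]

/-- Approximation of `w₂⁺(5/2)` in the variable `v = σ - 1/2`; the decimal is `e^{-5}` rounded. -/
noncomputable def wPoly (v : ℝ) : ℝ :=
  2/5 * (expPoly v * (1 - 1413/64 * (0.006737947 * quotPoly v)))

/-- Approximation of `(w₂⁺)'(5/2)`, the derivative being in `r` (it is not the derivative of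
`wPoly`), in the variable `v = σ - 1/2`. -/
noncomputable def wPoly' (v : ℝ) : ℝ :=
  -(v + 9/10) * wPoly v
    + 2/5 * (1413/64) * (expPoly v * (0.006737947 * (2/5 - 2 * scaledPoly v)))

/-! ### Comparison with the stated polynomials -/

lemma wPoly_approx {v : ℝ} (hv : |v| ≤ 1/2) :
    |79/691 - (737/2580) * v + (147/412) * v^2 - (49/165) * v^3
        + (103/556) * v^4 - (131/1419) * v^5 + (13/340) * v^6
        - (6/445) * v^7 - wPoly v| ≤ 2.5e-5 := by
  unfold wPoly expPoly quotPoly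
  have h := pow_bounds hv
  rw [abs_le]
  constructor <;>
    linarith [h 1, h 2, h 3, h 4, h 5, h 6, h 7, h 8, h 9, h 10,
      h 11, h 12, h 13, h 14, h 15, h 16, h 17, h 18]

lemma wPoly'_approx {v : ℝ} (hv : |v| ≤ 1/2) :
    |-(52/509) + (26/185) * v - (10/313) * v^2 - (80/857) * v^3
        + (41/307) * v^4 - (41/392) * v^5 + (66/1109) * v^6
        - (13/480) * v^7 - wPoly' v| ≤ 5.5e-5 := by
  unfold wPoly' wPoly scaledPoly expPoly quotPoly
  have h := pow_bounds hv
  rw [abs_le]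
  constructor <;>
    linarith [h 1, h 2, h 3, h 4, h 5, h 6, h 7, h 8, h 9, h 10,
      h 11, h 12, h 13, h 14, h 15, h 16, h 17, h 18, h 19]

lemma quotPoly_bound {v : ℝ} (hv : |v| ≤ 1/2) : |quotPoly v| ≤ 0.03 := by
  unfold quotPoly
  have h := pow_bounds hv
  rw [abs_le]
  constructor <;> linarith [h 1, h 2, h 3, h 4, h 5, h 6, h 7, h 8]

/-! ### Error of the approximations -/

lemma abs_mul_le_of_abs_eq_one {κ x e : ℝ} (hκ : |κ| = 1) (h : |x| ≤ e) : |κ * x| ≤ e := by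
  rwa [abs_mul, hκ, one_mul]

/-- Comparison principle run forward from `s = 0`. -/
lemma exp_sub_expPoly {s : ℝ} (hs : s ∈ Icc (0:ℝ) 1) :
    |Real.exp (-(5/2 * s)) - expPoly (s - 1/2)| ≤ 1e-6 := by
  -- Both signs of the error at once: `e^{5t/2} (10⁻⁶ + κ expPoly)` increases since the
  -- residual is at most `5/2 * 10⁻⁶`.
  have main : ∀ κ : ℝ, |κ| = 1 →
      κ * (Real.exp (-(5/2 * s)) - expPoly (s - 1/2)) ≤ 1e-6 := by
    intro κ hκ
    have hder : ∀ t : ℝ, HasDerivAt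
        (fun t => Real.exp (5/2 * t) * (1e-6 + κ * expPoly (t - 1/2)))
        (Real.exp (5/2 * t) * (2.5e-6 + κ * (expPoly' (t - 1/2) + 5/2 * expPoly (t - 1/2)))) t := by
      intro t
      have h1 : HasDerivAt (fun t : ℝ => 5/2 * t) (5/2) t := by
        simpa using (hasDerivAt_id t).const_mul (5/2 : ℝ)
      have h2 : HasDerivAt (fun t : ℝ => expPoly (t - 1/2)) (expPoly' (t - 1/2)) t :=
        (expPoly_hasDerivAt (t - 1/2)).comp_sub_const t (1/2)
      refine (h1.exp.mul ((h2.const_mul κ).const_add 1e-6)).congr_deriv ?_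
      ring
    have hmono : MonotoneOn (fun t => Real.exp (5/2 * t) * (1e-6 + κ * expPoly (t - 1/2)))
        (Icc 0 1) := by
      refine monotoneOn_of_deriv_nonneg (convex_Icc 0 1)
        (fun t _ => (hder t).continuousAt.continuousWithinAt)
        (fun t _ => (hder t).differentiableAt.differentiableWithinAt) (fun t ht => ?_)
      rw [(hder t).deriv]
      rw [interior_Icc] at ht
      refine mul_nonneg (Real.exp_pos _).le ?_
      have hr := expPoly_residual (v := t - 1/2) (abs_le.2 ⟨by linarith [ht.1], by linarith [ht.2]⟩)
      replace hr := abs_mul_le_of_abs_eq_one hκ hr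
      linarith [(abs_le.1 hr).1]
    have h0 := hmono (left_mem_Icc.2 zero_le_one) hs hs.1
    have hT0 : |1 - expPoly (0 - 1/2)| ≤ 1e-6 := by
      unfold expPoly; norm_num [abs_le]
    replace hT0 := abs_mul_le_of_abs_eq_one hκ hT0
    have hT0' := (abs_le.1 hT0).2
    simp only [mul_zero, Real.exp_zero, one_mul] at h0
    have h3 := mul_le_mul_of_nonneg_left (show κ ≤ Real.exp (5/2 * s) *
      (1e-6 + κ * expPoly (s - 1/2)) by linarith) (Real.exp_pos (-(5/2 * s))).le
    rw [← mul_assoc, ← Real.exp_add, neg_add_cancel, Real.exp_zero, one_mul] at h3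
    linarith
  have h1 := main 1 (by norm_num)
  have h2 := main (-1) (by norm_num)
  exact abs_le.2 ⟨by linarith, by linarith⟩

/-- Comparison principle run backward from `s = 1`. -/
lemma scaledE_sub_scaledPoly {s : ℝ} (hs : s ∈ Icc (0:ℝ) 1) :
    |scaledE s - scaledPoly (s - 1/2)| ≤ 1e-6 := by
  -- `e^{-5t} / (1 + t)` is an integrating factor of the equation for `h`; the product with
  -- `κ (h - scaledPoly) - 10⁻⁶` increases since the residual is at most `6 * 10⁻⁶`.
  have main : ∀ κ : ℝ, |κ| = 1 →
      κ * (scaledE s - scaledPoly (s - 1/2)) ≤ 1e-6 := by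
    intro κ hκ
    have hder : ∀ t : ℝ, 0 ≤ t → HasDerivAt
        (fun t => Real.exp (-(5 * t)) / (1 + t) *
          (κ * (scaledE t - scaledPoly (t - 1/2)) - 1e-6))
        (Real.exp (-(5 * t)) / (1 + t) ^ 2 * ((6 + 5 * t) * 1e-6
          - κ * ((1 + t) * scaledPoly' (t - 1/2) - (6 + 5 * t) * scaledPoly (t - 1/2)
            + (1 + t)))) t := by
      intro t ht
      have ht1 : 1 + t ≠ 0 := by positivity
      have h1 : HasDerivAt (fun t : ℝ => -(5 * t)) (-5) t := by
        simpa using ((hasDerivAt_id t).const_mul (5 : ℝ)).fun_neg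
      have h2 : HasDerivAt (fun t : ℝ => scaledPoly (t - 1/2)) (scaledPoly' (t - 1/2)) t :=
        (scaledPoly_hasDerivAt (t - 1/2)).comp_sub_const t (1/2)
      have h3 : HasDerivAt (fun t : ℝ => 1 + t) 1 t := (hasDerivAt_id t).const_add 1
      refine ((h1.exp.div h3 ht1).mul
        ((((scaledE_hasDerivAt ht).sub h2).const_mul κ).sub_const 1e-6)).congr_deriv ?_
      simp only [Pi.div_apply, Pi.sub_apply]
      field_simp
      ring
    have hmono : MonotoneOn (fun t => Real.exp (-(5 * t)) / (1 + t) *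
          (κ * (scaledE t - scaledPoly (t - 1/2)) - 1e-6)) (Icc 0 1) := by
      refine monotoneOn_of_deriv_nonneg (convex_Icc 0 1)
        (fun t ht => (hder t ht.1).continuousAt.continuousWithinAt)
        (fun t ht => ?_) (fun t ht => ?_)
      · rw [interior_Icc] at ht
        exact (hder t ht.1.le).differentiableAt.differentiableWithinAt
      rw [interior_Icc] at ht
      rw [(hder t ht.1.le).deriv]
      refine mul_nonneg (by positivity) ?_
      have hr := scaledPoly_residual (v := t - 1/2)
        (abs_le.2 ⟨by linarith [ht.1], by linarith [ht.2]⟩)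
      rw [show 3/2 + (t - 1/2) = 1 + t by ring,
        show 17/2 + 5 * (t - 1/2) = 6 + 5 * t by ring] at hr
      replace hr := abs_mul_le_of_abs_eq_one hκ hr
      linarith [(abs_le.1 hr).2, ht.1]
    have h1 := hmono hs (right_mem_Icc.2 zero_le_one) hs.2
    have hP1 : |2 * 0.0915634 - scaledPoly (1 - 1/2)| ≤ 6e-7 := by
      unfold scaledPoly quotPoly; norm_num [abs_le]
    have hu1 : |scaledE 1 - scaledPoly (1 - 1/2)| ≤ 1e-6 :=
      (abs_sub_le _ (2 * 0.0915634) _).trans (by linarith [scaledE_one])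
    replace hu1 := abs_mul_le_of_abs_eq_one hκ hu1
    have h2 : Real.exp (-(5 * s)) / (1 + s) *
        (κ * (scaledE s - scaledPoly (s - 1/2)) - 1e-6) ≤ 0 :=
      h1.trans (mul_nonpos_of_nonneg_of_nonpos (by positivity)
        (by linarith [(abs_le.1 hu1).2]))
    have hs0 := hs.1
    have := nonpos_of_mul_nonpos_right h2 (by positivity)
    linarith
  have h1 := main 1 (by norm_num)
  have h2 := main (-1) (by norm_num)
  exact abs_le.2 ⟨by linarith, by linarith⟩

/-- Mean value inequality for `h - scaledPoly` on `[0, s]`: by the differential equation its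
derivative is at most `6 * 10⁻⁶ + 6 * 10⁻⁶` in absolute value. -/
lemma scaledE_quotient {s : ℝ} (hs : s ∈ Ioc (0:ℝ) 1) :
    |(scaledE s - scaledE 0) / s - quotPoly (s - 1/2)| ≤ 1.2e-5 := by
  have hder : ∀ t ∈ Icc (0:ℝ) s, HasDerivWithinAt
      (fun t => scaledE t - scaledPoly (t - 1/2))
      ((6 + 5 * t) / (1 + t) * scaledE t - 1 - scaledPoly' (t - 1/2)) (Icc 0 s) t := by
    intro t ht
    exact ((scaledE_hasDerivAt ht.1).sub
      ((scaledPoly_hasDerivAt (t - 1/2)).comp_sub_const t (1/2))).hasDerivWithinAt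
  have hb : ∀ t ∈ Ico (0:ℝ) s,
      ‖(6 + 5 * t) / (1 + t) * scaledE t - 1 - scaledPoly' (t - 1/2)‖ ≤ 1.2e-5 := by
    intro t ht
    have ht0 := ht.1
    have ht1 : t ≤ 1 := ht.2.le.trans hs.2
    have hr := scaledPoly_residual (v := t - 1/2)
      (abs_le.2 ⟨by linarith, by linarith⟩)
    have hu := scaledE_sub_scaledPoly (s := t) ⟨ht0, ht1⟩
    have e : (6 + 5 * t) / (1 + t) * scaledE t - 1 - scaledPoly' (t - 1/2)
        = ((6 + 5 * t) * (scaledE t - scaledPoly (t - 1/2))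
          - ((3/2 + (t - 1/2)) * scaledPoly' (t - 1/2)
            - (17/2 + 5 * (t - 1/2)) * scaledPoly (t - 1/2) + (3/2 + (t - 1/2)))) / (1 + t) := by
      field_simp
      ring
    rw [e, Real.norm_eq_abs, abs_div, abs_of_pos (show 0 < 1 + t by linarith),
      div_le_iff₀ (by linarith)]
    refine (abs_sub _ _).trans ?_
    rw [abs_mul, abs_of_pos (show 0 < 6 + 5 * t by linarith)]
    nlinarith
  have h := norm_image_sub_le_of_norm_deriv_le_segment' hder hb s (right_mem_Icc.2 hs.1.le)
  have hs0 : s ≠ 0 := hs.1.ne'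
  have e : (scaledE s - scaledE 0) / s - quotPoly (s - 1/2)
      = (scaledE s - scaledPoly (s - 1/2) - (scaledE 0 - scaledPoly (0 - 1/2))) / s := by
    unfold scaledPoly
    field_simp
    ring
  rw [e, abs_div, abs_of_pos hs.1, div_le_iff₀ hs.1]
  simpa using h

lemma exp_neg_five : |Real.exp (-5) - 0.006737947| ≤ 1e-9 := by
  have h1 := Real.exp_one_gt_d9
  have h2 := Real.exp_one_lt_d9
  have h5 : Real.exp (-5) = (Real.exp 1 ^ 5)⁻¹ := by
    rw [Real.exp_neg, ← Real.exp_nat_mul]; norm_num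
  have hl : (2.7182818283 : ℝ)^5 ≤ Real.exp 1 ^ 5 := pow_le_pow_left₀ (by norm_num) h1.le 5
  have hu : Real.exp 1 ^ 5 ≤ (2.7182818286 : ℝ)^5 :=
    pow_le_pow_left₀ (Real.exp_pos 1).le h2.le 5
  have hl' := inv_anti₀ (by norm_num) hl
  have hu' := inv_anti₀ (by positivity) hu
  rw [h5, abs_le]
  constructor
  · refine le_trans ?_ (sub_le_sub_right hu' _)
    norm_num
  · refine (sub_le_sub_right hl' _).trans ?_
    norm_num

lemma abs_mul_sub_mul_le {x x₀ y y₀ a b A B : ℝ} (hx : |x - x₀| ≤ a) (hy : |y - y₀| ≤ b)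
    (hA : |x| ≤ A) (hB : |y₀| ≤ B) : |x * y - x₀ * y₀| ≤ A * b + a * B := by
  have e : x * y - x₀ * y₀ = x * (y - y₀) + (x - x₀) * y₀ := by ring
  rw [e]
  refine (abs_add_le _ _).trans ?_
  rw [abs_mul, abs_mul]
  exact add_le_add (mul_le_mul hA hy (abs_nonneg _) ((abs_nonneg _).trans hA))
    (mul_le_mul hx hB (abs_nonneg _) ((abs_nonneg _).trans hx))

/-! ### The quasi-solution at `r = 5/2` -/

/-- At `σ = 0` both sides are `0` by the convention for division by zero. -/
lemma f1_eq (σ : ℝ) :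
    f1 σ (5/2) = -(Real.exp (-5) * ((scaledE σ - scaledE 0) / σ)) := by
  have h1 : Real.exp (5 * (1 + σ)) = Real.exp 5 * Real.exp (5 * σ) := by
    rw [← Real.exp_add]; ring_nf
  unfold f1 scaledE
  rw [h1, Real.exp_neg]
  norm_num
  rw [show 2 * σ * (5/2) = 5 * σ by ring, show 2 * (1 + σ) * (5/2) = 5 * (1 + σ) by ring]
  have := (Real.exp_pos 5).ne'
  by_cases h : σ = 0
  · simp [h]
  · field_simp
    ring

lemma w2p_hasDerivAt {σ : ℝ} (hσ : 0 < σ) :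
    HasDerivAt (w2p σ) (-(σ + 2/5) * w2p σ (5/2)
      + 2/5 * (1413/64) * (Real.exp (-(5/2 * σ)) *
        (Real.exp (-5) * (2/5 - 2 * scaledE σ)))) (5/2) := by
  have l1 : HasDerivAt (fun r : ℝ => 2 * r) 2 (5/2) := by
    simpa using (hasDerivAt_id (5/2 : ℝ)).const_mul 2
  have l2 : HasDerivAt (fun r : ℝ => 2 * σ * r) (2 * σ) (5/2) := by
    simpa using (hasDerivAt_id (5/2 : ℝ)).const_mul (2 * σ)
  have l3 : HasDerivAt (fun r : ℝ => 2 * (1 + σ) * r) (2 * (1 + σ)) (5/2) := by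
    simpa using (hasDerivAt_id (5/2 : ℝ)).const_mul (2 * (1 + σ))
  have l4 : HasDerivAt (fun r : ℝ => -σ * r) (-σ) (5/2) := by
    simpa using (hasDerivAt_id (5/2 : ℝ)).const_mul (-σ)
  have e1 := (expInt_hasDerivAt (x := 2 * (5/2)) (by norm_num)).comp (5/2 : ℝ) l1
  have e2 := (expInt_hasDerivAt (x := 2 * (1 + σ) * (5/2)) (by positivity)).comp (5/2 : ℝ) l3
  have hf : HasDerivAt (f1 σ) (Real.exp (-5) * (2/5 - 2 * scaledE σ)) (5/2) := by
    refine ((e1.sub ((l2.exp.const_mul (1 + σ)).mul e2)).const_mul σ⁻¹).congr_deriv ?_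
    simp only [Function.comp, scaledE]
    rw [show 2 * σ * (5/2) = 5 * σ by ring, show 2 * (1 + σ) * (5/2) = 5 * (1 + σ) by ring,
      show -(5 * (1 + σ)) = -5 + -(5 * σ) by ring, show 5 * (1 + σ) = 5 + 5 * σ by ring,
      Real.exp_add, Real.exp_add, Real.exp_neg (5 * σ), show -(2 * (5/2) : ℝ) = -5 by norm_num,
      Real.exp_neg 5]
    have := (Real.exp_pos 5).ne'
    have := (Real.exp_pos (5 * σ)).ne'
    have : 5 + 5 * σ ≠ 0 := by positivity
    have : 1 + σ ≠ 0 := by positivity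
    field_simp
    ring
  have hw := (l4.exp.div (hasDerivAt_id (5/2 : ℝ)) (by norm_num)).mul
    ((hf.const_mul (1413/64)).const_add 1)
  refine hw.congr_deriv ?_
  simp only [w2p, Pi.div_apply, id]
  rw [show -σ * (5/2) = -(5/2 * σ) by ring]
  ring

/-- Polynomial (in `z = 2σ - 1`) approximations of `w₂⁺(5/2)` and `(w₂⁺)'(5/2)`. -/
theorem w2p_polynomial_approx
    (lam : ℝ) (hlam : lam ∈ Set.Ico (0:ℝ) 1)
    (σ : ℝ) (hσ : σ = Real.sqrt (1 - lam))
    (z : ℝ) (hz : z = 2 * σ - 1) :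
    |79/691 - (737/2580) * (z/2) + (147/412) * (z/2)^2 - (49/165) * (z/2)^3
        + (103/556) * (z/2)^4 - (131/1419) * (z/2)^5 + (13/340) * (z/2)^6
        - (6/445) * (z/2)^7 - w2p σ (5/2)| < 3e-5 ∧
    |-(52/509) + (26/185) * (z/2) - (10/313) * (z/2)^2 - (80/857) * (z/2)^3
        + (41/307) * (z/2)^4 - (41/392) * (z/2)^5 + (66/1109) * (z/2)^6
        - (13/480) * (z/2)^7 - deriv (w2p σ) (5/2)| < 6e-5 := by
  have hσ0 : 0 < σ := by rw [hσ]; exact Real.sqrt_pos.2 (by linarith [hlam.2])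
  have hσ1 : σ ≤ 1 := by rw [hσ]; exact Real.sqrt_le_one.2 (by linarith [hlam.1])
  have hv : z/2 = σ - 1/2 := by rw [hz]; ring
  rw [hv, (w2p_hasDerivAt hσ0).deriv]
  have hvb : |σ - 1/2| ≤ 1/2 := abs_le.2 ⟨by linarith, by linarith⟩
  have hT := exp_sub_expPoly ⟨hσ0.le, hσ1⟩
  have hP := scaledE_sub_scaledPoly ⟨hσ0.le, hσ1⟩
  have hQ := scaledE_quotient ⟨hσ0, hσ1⟩
  have hY := exp_neg_five
  have hX1 : |Real.exp (-(5/2 * σ))| ≤ 1 := by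
    rw [abs_of_pos (Real.exp_pos _)]; exact Real.exp_le_one_iff.2 (by linarith)
  have hY1 : |Real.exp (-5)| ≤ 0.007 := by
    rw [abs_of_pos (Real.exp_pos _)]; linarith [(abs_le.1 hY).2]
  have hQ1 : |quotPoly (σ - 1/2)| ≤ 0.03 := quotPoly_bound hvb
  have hP1 : |2/5 - 2 * scaledPoly (σ - 1/2)| ≤ 1 := by
    unfold scaledPoly
    have h := abs_le.1 hQ1
    rw [abs_le]
    constructor <;> nlinarith
  have hYQ := abs_mul_sub_mul_le hY hQ hY1 hQ1
  have hYP : |Real.exp (-5) * (2/5 - 2 * scaledE σ)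
      - 0.006737947 * (2/5 - 2 * scaledPoly (σ - 1/2))| ≤ 0.007 * 2e-6 + 1e-9 * 1 := by
    refine abs_mul_sub_mul_le hY ?_ hY1 hP1
    rw [abs_le] at hP ⊢
    constructor <;> linarith
  have hM1 : |1 - 1413/64 * (0.006737947 * quotPoly (σ - 1/2))| ≤ 1.1 := by
    rw [abs_le] at hQ1 ⊢
    constructor <;> linarith
  have hN1 : |0.006737947 * (2/5 - 2 * scaledPoly (σ - 1/2))| ≤ 0.007 := by
    rw [abs_le] at hP1 ⊢
    constructor <;> linarith
  have hM : |(1 + 1413/64 * f1 σ (5/2))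
      - (1 - 1413/64 * (0.006737947 * quotPoly (σ - 1/2)))| ≤ 2e-6 := by
    rw [f1_eq]
    rw [abs_le] at hYQ ⊢
    constructor <;> linarith
  have hXM := abs_mul_sub_mul_le hT hM hX1 hM1
  have hXN := abs_mul_sub_mul_le hT hYP hX1 hN1
  have hw : |w2p σ (5/2) - wPoly (σ - 1/2)| ≤ 1.3e-6 := by
    have e : w2p σ (5/2) = 2/5 * (Real.exp (-(5/2 * σ)) * (1 + 1413/64 * f1 σ (5/2))) := by
      unfold w2p
      rw [show -σ * (5/2) = -(5/2 * σ) by ring]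
      ring
    rw [e, wPoly, ← mul_sub, abs_mul]
    norm_num at hXM ⊢
    linarith
  have hw' : |(-(σ + 2/5) * w2p σ (5/2)
      + 2/5 * (1413/64) * (Real.exp (-(5/2 * σ)) * (Real.exp (-5) * (2/5 - 2 * scaledE σ))))
      - wPoly' (σ - 1/2)| ≤ 3e-6 := by
    unfold wPoly'
    rw [abs_le] at hw hXN ⊢
    constructor <;> nlinarith
  have h1 := wPoly_approx hvb
  have h2 := wPoly'_approx hvb
  constructor
  · refine (abs_sub_le _ (wPoly (σ - 1/2)) _).trans_lt ?_
    rw [abs_sub_comm] at hw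
    linarith
  · refine (abs_sub_le _ (wPoly' (σ - 1/2)) _).trans_lt ?_
    rw [abs_sub_comm] at hw'
    linarith
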